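/- Suppose f satisfies the local condition. Then both limits L₁ = lim_{x→∞} (log x)·∏_{p ≤ x} (1 − ν₁(p)/(p − 1)) and L₂ = lim_{x→∞} (log x)²·∏_{p ≤ x} (1 − ν₂(p)/p) exist, are positive, and satisfy L₂ = e^{−γ}·L₁, where γ is Euler's constant. -/

import Mathlib

open Polynomial Filter

/-- ν₁(d) = #{a mod d : gcd(a,d) = 1 and f(a) ≡ 0 (mod d)} -/
def nu1 (f : Polynomial ℤ) (d : ℕ) : ℕ :=
  ((Finset.range d).filter (fun a : ℕ => Nat.gcd a d = 1 ∧ (d : ℤ) ∣ f.eval (a : ℤ))).card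

/-- ν₂(d) = #{a mod d : a·f(a) ≡ 0 (mod d)} -/
def nu2 (f : Polynomial ℤ) (d : ℕ) : ℕ :=
  ((Finset.range d).filter (fun a : ℕ => (d : ℤ) ∣ (a : ℤ) * f.eval (a : ℤ))).card

/-! Let `K = ℚ(x)` with `f(x) = 0`. For all but finitely many primes `p`, `ν₁(p)` is the number of
ideals of norm `p` in `𝓞 K`: these ideals are the kernels of the ring homomorphisms `𝓞 K → ℤ/p`, and
such a homomorphism is determined by the image of the integral generator `θ = a x`, where `a` is
the leading coefficient of `f`; this image can be any root of the minimal polynomial of `θ` mod `p`.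

The Dedekind zeta function has a simple pole at `1` and an Euler product over the prime ideals `P`,
so `∑ N(P)⁻¹ N(P)^(-δ) = -log δ + C + o(1)` as `δ → 0⁺`. The Tauberian theorem of Karamata and
de Haan turns this into Mertens' second theorem `∑_{N(P) ≤ x} N(P)⁻¹ = log log x + M + o(1)`. The
primes `P` whose norm is not a prime number contribute a convergent series, so
`∑_{p ≤ x} ν₁(p)/p - log log x` converges as well, and exponentiating gives `L₁ > 0`.

For `K = ℚ` the constant is explicit, which is Mertens' third theorem
`log x · ∏_{p ≤ x} (1 - 1/p) → e^(-γ)`. Since `ν₂(p) = ν₁(p) + 1`, each factor of the second product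
is `1 - ν₂(p)/p = (1 - 1/p)(1 - ν₁(p)/(p - 1))`, whence `L₂ = e^(-γ) L₁`.

In the Tauberian argument the constant is found by comparison with the masses `1/(n + 1)` at the
points `n + 1`, for which both sides are known; after subtraction, convergence passes from powers
of `e^(-δt)` to polynomials in it, to continuous functions by Weierstrass approximation, and to the
indicator of `t ≤ T` by monotonicity. -/

section Tauberian

open Real Set Topology

variable {ι κ : Type*} {a t : ι → ℝ} {b s : κ → ℝ} {C D δ : ℝ} {p q : ℝ → ℝ}

/-- The Laplace transform, at `δ`, of the measure with mass `a i` at the point `t i`. -/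
noncomputable def laplaceSum (a t : ι → ℝ) (δ : ℝ) : ℝ :=
  ∑' i, a i * exp (-(δ * t i))

/-- The total mass at points up to `T` of the measure with mass `a i` at the point `t i`. -/
noncomputable def cumulativeSum (a t : ι → ℝ) (T : ℝ) : ℝ :=
  ∑' i, if t i ≤ T then a i else 0

/-- Karamata's functional: the integral of `y (1 - y) q(y)`, where `y = exp (-δ t)`, against the
measure with mass `a i` at the point `t i`. The factor `y` gives convergence at infinity, and the
factor `1 - y` keeps the functional bounded as `δ → 0`. -/
noncomputable def kernelSum (a t : ι → ℝ) (q : ℝ → ℝ) (δ : ℝ) : ℝ :=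
  ∑' i, a i * (exp (-(δ * t i)) * (1 - exp (-(δ * t i))) * q (exp (-(δ * t i))))

/-- The measure with mass `a i` at the point `t i` is supported on `[0, ∞)`, and its Laplace
transform is `-log δ + C + o(1)` as `δ → 0⁺`. -/
structure HasLogLaplaceTransform (a t : ι → ℝ) (C : ℝ) : Prop where
  weight_nonneg : ∀ i, 0 ≤ a i
  point_nonneg : ∀ i, 0 ≤ t i
  summable : ∀ δ : ℝ, 0 < δ → Summable fun i => a i * exp (-(δ * t i))
  tendsto : Tendsto (fun δ => laplaceSum a t δ + log δ) (𝓝[>] 0) (𝓝 C)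

lemma exists_continuous_cutoff {u v : ℝ} (hv : 0 < v) (hvu : v < u) (hu : u < 1) :
    ∃ q : ℝ → ℝ, Continuous q ∧ ∀ y, y + y * (1 - y) * q y ∈ Icc (0 : ℝ) 1 ∧
      (u ≤ y → y + y * (1 - y) * q y = 1) ∧ (y ≤ v → y + y * (1 - y) * q y = 0) := by
  set φ : ℝ → ℝ := fun y => max 0 (min 1 ((y - v) / (u - v))) with hφ
  have hd : 0 < u - v := sub_pos.2 hvu
  have hφc : Continuous φ := by fun_prop
  have φ_eq_one : ∀ y, u ≤ y → φ y = 1 := fun y hy => by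
    have : 1 ≤ (y - v) / (u - v) := by rw [le_div_iff₀ hd]; linarith
    simp [hφ, this]
  have φ_eq_zero : ∀ y, y ≤ v → φ y = 0 := fun y hy => by
    have : (y - v) / (u - v) ≤ 0 := div_nonpos_of_nonpos_of_nonneg (sub_nonpos.2 hy) hd.le
    simp [hφ, this]
  -- The solution `(φ y - y) / (y (1 - y)) = φ y / y - (1 - φ y) / (1 - y)`, with denominators
  -- truncated where the numerators vanish.
  refine ⟨fun y => φ y / max y v - (1 - φ y) / max (1 - y) (1 - u), ?_, fun y => ?_⟩
  · exact (hφc.div (by fun_prop) fun y => (lt_max_of_lt_right hv).ne').sub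
      ((continuous_const.sub hφc).div (by fun_prop)
        fun y => (lt_max_of_lt_right (sub_pos.2 hu)).ne')
  · have hleft : y * (φ y / max y v) = φ y := by
      rcases le_or_gt y v with h | h
      · simp [φ_eq_zero y h]
      · rw [max_eq_left h.le, mul_div_cancel₀ _ (hv.trans h).ne']
    have hright : (1 - y) * ((1 - φ y) / max (1 - y) (1 - u)) = 1 - φ y := by
      rcases le_or_gt u y with h | h
      · simp [φ_eq_one y h]
      · rw [max_eq_left (by linarith), mul_div_cancel₀ _ (by linarith)]
    have heq : y + y * (1 - y) * (φ y / max y v - (1 - φ y) / max (1 - y) (1 - u)) = φ y := by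
      linear_combination (1 - y) * hleft - y * hright
    rw [heq]
    exact ⟨⟨le_max_left _ _, max_le zero_le_one (min_le_left _ _)⟩, φ_eq_one y, φ_eq_zero y⟩

namespace HasLogLaplaceTransform

lemma exp_mem_Icc (h : HasLogLaplaceTransform a t C) (hδ : 0 < δ) (i : ι) :
    exp (-(δ * t i)) ∈ Icc (0 : ℝ) 1 :=
  ⟨(exp_pos _).le, exp_le_one_iff.2 (neg_nonpos.2 (mul_nonneg hδ.le (h.point_nonneg i)))⟩

lemma summable_kernel (h : HasLogLaplaceTransform a t C) (hδ : 0 < δ) (hq : Continuous q) :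
    Summable fun i =>
      a i * (exp (-(δ * t i)) * (1 - exp (-(δ * t i))) * q (exp (-(δ * t i)))) := by
  have hcont : Continuous fun y : ℝ => (1 - y) * q y := by fun_prop
  obtain ⟨M, hM⟩ := (isCompact_Icc (a := (0 : ℝ)) (b := 1)).exists_bound_of_continuousOn
    hcont.continuousOn
  refine .of_norm_bounded ((h.summable δ hδ).mul_right M) fun i => ?_
  rw [mul_assoc (exp _), ← mul_assoc, norm_mul,
    Real.norm_of_nonneg (mul_nonneg (h.weight_nonneg i) (exp_pos _).le)]
  exact mul_le_mul_of_nonneg_left (hM _ (h.exp_mem_Icc hδ i))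
    (mul_nonneg (h.weight_nonneg i) (exp_pos _).le)

lemma summable_ite (h : HasLogLaplaceTransform a t C) (T : ℝ) :
    Summable fun i => if t i ≤ T then a i else 0 := by
  refine .of_nonneg_of_le (fun i => ?_) (fun i => ?_) ((h.summable 1 one_pos).mul_left (exp T))
  · split_ifs
    exacts [h.weight_nonneg i, le_rfl]
  · split_ifs with hi
    · have : 1 ≤ exp T * exp (-(1 * t i)) := by
        rw [← exp_add]; exact one_le_exp (by linarith)
      nlinarith [h.weight_nonneg i]
    · exact mul_nonneg (exp_pos _).le (mul_nonneg (h.weight_nonneg i) (exp_pos _).le)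

lemma kernelSum_add (h : HasLogLaplaceTransform a t C) (hδ : 0 < δ) (hp : Continuous p)
    (hq : Continuous q) :
    kernelSum a t (p + q) δ = kernelSum a t p δ + kernelSum a t q δ := by
  simp only [kernelSum, Pi.add_apply, mul_add]
  exact (h.summable_kernel hδ hp).tsum_add (h.summable_kernel hδ hq)

lemma abs_kernelSum_sub_le (h : HasLogLaplaceTransform a t C) (hδ : 0 < δ) (hp : Continuous p)
    (hq : Continuous q) {η : ℝ} (hpq : ∀ y ∈ Icc (0 : ℝ) 1, |p y - q y| ≤ η) :
    |kernelSum a t p δ - kernelSum a t q δ| ≤ η * kernelSum a t 1 δ := by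
  rw [kernelSum, kernelSum, ← (h.summable_kernel hδ hp).tsum_sub (h.summable_kernel hδ hq),
    kernelSum, ← tsum_mul_left, ← Real.norm_eq_abs]
  refine tsum_of_norm_bounded ((h.summable_kernel hδ continuous_one).mul_left η).hasSum fun i => ?_
  have hy := h.exp_mem_Icc hδ i
  have hweight := mul_nonneg (h.weight_nonneg i) (mul_nonneg hy.1 (sub_nonneg.2 hy.2))
  rw [← mul_sub, ← mul_sub, ← mul_assoc, norm_mul, Real.norm_of_nonneg hweight, Real.norm_eq_abs,
    Pi.one_apply, mul_one, mul_comm η]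
  exact mul_le_mul_of_nonneg_left (hpq _ hy) hweight

lemma tendsto_laplaceSum_mul (h : HasLogLaplaceTransform a t C) {c : ℝ} (hc : 0 < c) :
    Tendsto (fun δ => laplaceSum a t (c * δ) + log δ) (𝓝[>] 0) (𝓝 (C - log c)) := by
  have hscale : Tendsto (fun δ : ℝ => c * δ) (𝓝[>] 0) (𝓝[>] 0) := by
    refine tendsto_nhdsWithin_iff.2 ⟨?_, ?_⟩
    · exact tendsto_nhdsWithin_of_tendsto_nhds
        ((continuous_const.mul continuous_id).tendsto' 0 0 (mul_zero c))
    · filter_upwards [self_mem_nhdsWithin] with δ hδ using mul_pos hc hδ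
  refine ((h.tendsto.comp hscale).sub_const (log c)).congr' ?_
  filter_upwards [self_mem_nhdsWithin] with δ hδ
  rw [Function.comp_apply, log_mul hc.ne' (ne_of_gt hδ)]
  ring

lemma kernelSum_pow (h : HasLogLaplaceTransform a t C) (hδ : 0 < δ) (k : ℕ) :
    kernelSum a t (fun y => y ^ k) δ =
      laplaceSum a t ((k + 1) * δ) - laplaceSum a t ((k + 2) * δ) := by
  rw [laplaceSum, laplaceSum,
    ← (h.summable _ (by positivity)).tsum_sub (h.summable _ (by positivity))]
  refine tsum_congr fun i => ?_
  have hpow : ∀ m : ℕ, exp (-(m * δ * t i)) = exp (-(δ * t i)) ^ m := fun m => by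
    rw [← exp_nat_mul]; congr 1; ring
  have hsucc := hpow (k + 1)
  have hsucc₂ := hpow (k + 2)
  push_cast at hsucc hsucc₂
  rw [hsucc, hsucc₂]
  ring

lemma tendsto_kernelSum_pow (h : HasLogLaplaceTransform a t C) (k : ℕ) :
    Tendsto (kernelSum a t fun y => y ^ k) (𝓝[>] 0) (𝓝 (log (k + 2) - log (k + 1))) := by
  have hlim := (h.tendsto_laplaceSum_mul (c := k + 1) (by positivity)).sub
    (h.tendsto_laplaceSum_mul (c := k + 2) (by positivity))
  rw [sub_sub_sub_cancel_left] at hlim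
  refine hlim.congr' ?_
  filter_upwards [self_mem_nhdsWithin] with δ hδ
  rw [h.kernelSum_pow hδ k, add_sub_add_right_eq_sub]

lemma tendsto_kernelSum_sub_polynomial (ha : HasLogLaplaceTransform a t C)
    (hb : HasLogLaplaceTransform b s D) (P : ℝ[X]) :
    Tendsto (fun δ => kernelSum a t (fun y => P.eval y) δ - kernelSum b s (fun y => P.eval y) δ)
      (𝓝[>] 0) (𝓝 0) := by
  induction P using Polynomial.induction_on' with
  | add P Q hP hQ =>
    have hlim := hP.add hQ
    rw [add_zero] at hlim
    refine hlim.congr' ?_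
    filter_upwards [self_mem_nhdsWithin] with δ hδ
    have heval : (fun y => (P + Q).eval y) = (fun y => P.eval y) + fun y => Q.eval y :=
      funext fun y => eval_add
    rw [heval, ha.kernelSum_add hδ P.continuous Q.continuous,
      hb.kernelSum_add hδ P.continuous Q.continuous]
    ring
  | monomial k c =>
    have hlim := ((ha.tendsto_kernelSum_pow k).sub (hb.tendsto_kernelSum_pow k)).const_mul c
    rw [sub_self, mul_zero] at hlim
    refine hlim.congr fun δ => ?_
    simp only [kernelSum, eval_monomial, mul_left_comm _ c, tsum_mul_left, mul_sub]

lemma eventually_kernelSum_one_lt_one (h : HasLogLaplaceTransform a t C) :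
    ∀ᶠ δ in 𝓝[>] 0, kernelSum a t 1 δ < 1 := by
  have hlim := h.tendsto_kernelSum_pow 0
  simp only [Nat.cast_zero, zero_add, log_one, sub_zero, pow_zero] at hlim
  exact hlim.eventually (gt_mem_nhds (log_two_lt_d9.trans (by norm_num)))

lemma tendsto_kernelSum_sub (ha : HasLogLaplaceTransform a t C)
    (hb : HasLogLaplaceTransform b s D) (hq : Continuous q) :
    Tendsto (fun δ => kernelSum a t q δ - kernelSum b s q δ) (𝓝[>] 0) (𝓝 0) := by
  refine Metric.tendsto_nhds.2 fun ε hε => ?_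
  obtain ⟨P, hP⟩ := exists_polynomial_near_of_continuousOn 0 1 q hq.continuousOn (ε / 3)
    (by positivity)
  have hqP : ∀ y ∈ Icc (0 : ℝ) 1, |q y - P.eval y| ≤ ε / 3 := fun y hy => by
    rw [abs_sub_comm]; exact (hP y hy).le
  filter_upwards [(ha.tendsto_kernelSum_sub_polynomial hb P).eventually
      (Metric.ball_mem_nhds 0 (show 0 < ε / 3 by positivity)),
    ha.eventually_kernelSum_one_lt_one, hb.eventually_kernelSum_one_lt_one,
    self_mem_nhdsWithin] with δ hpoly ha1 hb1 hδ
  have hapx := abs_le.1 (ha.abs_kernelSum_sub_le hδ hq P.continuous hqP)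
  have hbpx := abs_le.1 (hb.abs_kernelSum_sub_le hδ hq P.continuous hqP)
  rw [dist_zero_right, Real.norm_eq_abs, abs_lt] at hpoly
  rw [dist_zero_right, Real.norm_eq_abs, abs_lt]
  constructor <;> nlinarith

lemma cumulativeSum_le (h : HasLogLaplaceTransform a t C) {T : ℝ} (hT : 0 < T)
    (hq : Continuous q) (hnonneg : ∀ y ∈ Icc (0 : ℝ) 1, 0 ≤ y + y * (1 - y) * q y)
    (hone : ∀ y ∈ Icc (0 : ℝ) 1, exp (-1) ≤ y → 1 ≤ y + y * (1 - y) * q y) :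
    cumulativeSum a t T ≤ laplaceSum a t T⁻¹ + kernelSum a t q T⁻¹ := by
  have hδ : 0 < T⁻¹ := inv_pos.2 hT
  have hsum := (h.summable _ hδ).add (h.summable_kernel hδ hq)
  rw [laplaceSum, kernelSum, ← (h.summable _ hδ).tsum_add (h.summable_kernel hδ hq)]
  refine (h.summable_ite T).tsum_le_tsum (fun i => ?_) hsum
  have hy := h.exp_mem_Icc hδ i
  rw [← mul_add]
  split_ifs with hi
  · refine le_mul_of_one_le_right (h.weight_nonneg i) (hone _ hy (exp_le_exp.2 ?_))
    exact neg_le_neg (by rwa [inv_mul_le_iff₀ hT, mul_one])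
  · exact mul_nonneg (h.weight_nonneg i) (hnonneg _ hy)

lemma le_cumulativeSum (h : HasLogLaplaceTransform a t C) {T r : ℝ} (hT : 0 < T)
    (hq : Continuous q) (hle : ∀ y ∈ Icc (0 : ℝ) 1, y + y * (1 - y) * q y ≤ 1)
    (hzero : ∀ y ∈ Icc (0 : ℝ) 1, y ≤ exp (-r) → y + y * (1 - y) * q y ≤ 0) :
    laplaceSum a t T⁻¹ + kernelSum a t q T⁻¹ ≤ cumulativeSum a t (r * T) := by
  have hδ : 0 < T⁻¹ := inv_pos.2 hT
  have hsum := (h.summable _ hδ).add (h.summable_kernel hδ hq)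
  rw [laplaceSum, kernelSum, ← (h.summable _ hδ).tsum_add (h.summable_kernel hδ hq)]
  refine hsum.tsum_le_tsum (fun i => ?_) (h.summable_ite (r * T))
  have hy := h.exp_mem_Icc hδ i
  rw [← mul_add]
  split_ifs with hi
  · exact mul_le_of_le_one_right (h.weight_nonneg i) (hle _ hy)
  · refine mul_nonpos_of_nonneg_of_nonpos (h.weight_nonneg i) (hzero _ hy (exp_le_exp.2 ?_))
    exact neg_le_neg (by rw [le_inv_mul_iff₀ hT, mul_comm]; exact (not_le.1 hi).le)

lemma eventually_cumulativeSum_le (ha : HasLogLaplaceTransform a t C)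
    (hb : HasLogLaplaceTransform b s D) {r ε : ℝ} (hr : 1 < r) (hε : 0 < ε) :
    ∀ᶠ T in atTop, cumulativeSum a t T ≤ cumulativeSum b s (r * T) + (C - D) + ε := by
  obtain ⟨q, hq, hcut⟩ := exists_continuous_cutoff (exp_pos (-r)) (exp_lt_exp.2 (neg_lt_neg hr))
    (exp_lt_one_iff.2 (by norm_num : (-1 : ℝ) < 0))
  have hdiff := (ha.tendsto.sub hb.tendsto).add (ha.tendsto_kernelSum_sub hb hq)
  filter_upwards [(hdiff.comp tendsto_inv_atTop_nhdsGT_zero).eventually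
    (gt_mem_nhds (show C - D + 0 < C - D + ε by linarith)), eventually_gt_atTop 0] with T hlt hT
  have hupper := ha.cumulativeSum_le hT hq (fun y _ => (hcut y).1.1)
    fun y _ h => ((hcut y).2.1 h).ge
  have hlower := hb.le_cumulativeSum hT hq (fun y _ => (hcut y).1.2)
    fun y _ h => ((hcut y).2.2 h).le
  simp only [Function.comp_apply] at hlt
  linarith

end HasLogLaplaceTransform

lemma hasSum_inv_succ_mul_exp (hδ : 0 < δ) :
    HasSum (fun n : ℕ => ((n : ℝ) + 1)⁻¹ * exp (-(δ * (n + 1)))) (-log (1 - exp (-δ))) := by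
  have hlt : |exp (-δ)| < 1 := by rwa [abs_exp, exp_lt_one_iff, neg_lt_zero]
  refine (hasSum_pow_div_log_of_abs_lt_one hlt).congr_fun fun n => ?_
  rw [← exp_nat_mul, div_eq_inv_mul]
  push_cast
  ring_nf

lemma hasLogLaplaceTransform_inv_succ :
    HasLogLaplaceTransform (fun n : ℕ => ((n : ℝ) + 1)⁻¹) (fun n => (n : ℝ) + 1) 0 where
  weight_nonneg n := by positivity
  point_nonneg n := by positivity
  summable δ hδ := (hasSum_inv_succ_mul_exp hδ).summable
  tendsto := by
    have hderiv : HasDerivAt (fun δ : ℝ => 1 - exp (-δ)) 1 0 := by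
      simpa using ((hasDerivAt_id (0 : ℝ)).neg.exp).const_sub 1
    have hslope : Tendsto (fun δ : ℝ => (1 - exp (-δ)) / δ) (𝓝[>] 0) (𝓝 1) := by
      simpa [div_eq_inv_mul] using hderiv.tendsto_slope_zero_right
    have hlim := (hslope.log one_ne_zero).neg
    rw [log_one, neg_zero] at hlim
    refine hlim.congr' ?_
    filter_upwards [self_mem_nhdsWithin] with δ (hδ : 0 < δ)
    have hpos : 0 < 1 - exp (-δ) := sub_pos.2 (exp_lt_one_iff.2 (by linarith))
    rw [laplaceSum, (hasSum_inv_succ_mul_exp hδ).tsum_eq, log_div hpos.ne' hδ.ne']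
    ring

lemma cumulativeSum_inv_succ {T : ℝ} (hT : 0 ≤ T) :
    cumulativeSum (fun n : ℕ => ((n : ℝ) + 1)⁻¹) (fun n => (n : ℝ) + 1) T = harmonic ⌊T⌋₊ := by
  have hle : ∀ n : ℕ, (n : ℝ) + 1 ≤ T ↔ n ∈ Finset.range ⌊T⌋₊ := fun n => by
    rw [Finset.mem_range, ← Nat.succ_le_iff, Nat.le_floor_iff hT, Nat.cast_succ]
  simp only [cumulativeSum, hle]
  rw [tsum_eq_sum (s := Finset.range ⌊T⌋₊) fun n hn => if_neg hn, harmonic]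
  push_cast
  exact Finset.sum_congr rfl fun n hn => if_pos hn

lemma tendsto_cumulativeSum_inv_succ :
    Tendsto (fun T => cumulativeSum (fun n : ℕ => ((n : ℝ) + 1)⁻¹) (fun n => (n : ℝ) + 1) T - log T)
      atTop (𝓝 eulerMascheroniConstant) := by
  have hratio := (tendsto_nat_floor_div_atTop (R := ℝ)).log one_ne_zero
  have hlim := (tendsto_harmonic_sub_log.comp (tendsto_nat_floor_atTop (α := ℝ))).add hratio
  rw [log_one, add_zero] at hlim
  refine hlim.congr' ?_
  filter_upwards [eventually_ge_atTop 1] with T hT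
  have hfloor : 0 < ⌊T⌋₊ := Nat.floor_pos.2 hT
  rw [cumulativeSum_inv_succ (by linarith), Function.comp_apply,
    log_div (by positivity) (by positivity)]
  ring

theorem HasLogLaplaceTransform.tendsto_cumulativeSum_sub_log (h : HasLogLaplaceTransform a t C) :
    Tendsto (fun T => cumulativeSum a t T - log T) atTop (𝓝 (C + eulerMascheroniConstant)) := by
  refine Metric.tendsto_nhds.2 fun ε hε => ?_
  have hr : 1 < exp (ε / 4) := one_lt_exp_iff.2 (by positivity)
  have hpos := exp_pos (ε / 4)
  have hmul : Tendsto (fun T => exp (ε / 4) * T) atTop atTop := tendsto_id.const_mul_atTop hpos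
  have hdiv : Tendsto (fun T => T / exp (ε / 4)) atTop atTop := tendsto_id.atTop_div_const hpos
  have href := tendsto_cumulativeSum_inv_succ.eventually
    (Metric.ball_mem_nhds eulerMascheroniConstant (show 0 < ε / 4 by positivity))
  filter_upwards [h.eventually_cumulativeSum_le hasLogLaplaceTransform_inv_succ hr
      (show 0 < ε / 4 by positivity),
    hdiv.eventually (hasLogLaplaceTransform_inv_succ.eventually_cumulativeSum_le h hr
      (show 0 < ε / 4 by positivity)),
    hmul.eventually href, hdiv.eventually href, eventually_gt_atTop 0]
    with T hupper hlower hmulT hdivT hT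
  rw [mul_div_cancel₀ _ hpos.ne'] at hlower
  rw [Real.dist_eq, log_mul hpos.ne' hT.ne', log_exp, abs_lt] at hmulT
  rw [Real.dist_eq, log_div hT.ne' hpos.ne', log_exp, abs_lt] at hdivT
  rw [Real.dist_eq, abs_lt]
  constructor <;> linarith

end Tauberian

section BeurlingPrimes

open Real Set Topology

variable {ι : Type*} {N : ι → ℝ} {Z : ℝ → ℝ} {ρ y s : ℝ}

lemma abs_log_one_sub_add_le (hy : y ≤ 1 / 2) : |log (1 - y) + y| ≤ 2 * y ^ 2 := by
  have hpos : 0 < 1 - y := by linarith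
  have hinv : (1 - y)⁻¹ ≤ 1 + y + 2 * y ^ 2 := by
    rw [inv_le_iff_one_le_mul₀ hpos]
    nlinarith [mul_nonneg (sq_nonneg y) (sub_nonneg.2 hy)]
  have hupper := log_le_sub_one_of_pos hpos
  have hlower := one_sub_inv_le_log_of_pos hpos
  rw [abs_le]
  constructor <;> nlinarith [sq_nonneg y]

lemma hasSum_log_of_hasProd {u : ι → ℝ} {c : ℝ} (hu : ∀ i, u i ≠ 0) (hc : c ≠ 0)
    (h : HasProd u c) : HasSum (fun i => log (u i)) (log c) :=
  ((continuousAt_log hc).tendsto.comp h).congr fun _ => log_prod fun i _ => hu i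

/-- The reals `N i ≥ 2` are the norms of a system of generalized primes in the sense of Beurling,
with zeta function `Z s = ∏ᵢ (1 - N i ^ (-s))⁻¹` on `s > 1` having a simple pole of residue `ρ` at
`s = 1`. Only real `s` occur. -/
structure IsBeurlingPrimeSystem (N : ι → ℝ) (Z : ℝ → ℝ) (ρ : ℝ) : Prop where
  two_le : ∀ i, 2 ≤ N i
  hasProd : ∀ s, 1 < s → HasProd (fun i => (1 - N i ^ (-s))⁻¹) (Z s)
  residue_pos : 0 < ρ
  tendsto : Tendsto (fun s => (s - 1) * Z s) (𝓝[>] 1) (𝓝 ρ)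

/-- The constant `∑ᵢ (log (1 - (N i)⁻¹) + (N i)⁻¹)` of Mertens' second theorem; for the ordinary
primes it is the Meissel-Mertens constant minus Euler's constant. -/
noncomputable def mertensConstant (N : ι → ℝ) : ℝ :=
  ∑' i, (log (1 - (N i)⁻¹) + (N i)⁻¹)

namespace IsBeurlingPrimeSystem

lemma pos (h : IsBeurlingPrimeSystem N Z ρ) (i : ι) : 0 < N i :=
  two_pos.trans_le (h.two_le i)

lemma rpow_neg_le_inv (h : IsBeurlingPrimeSystem N Z ρ) (hs : 1 ≤ s) (i : ι) :
    N i ^ (-s) ≤ (N i)⁻¹ := by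
  rw [← rpow_neg_one]
  exact rpow_le_rpow_of_exponent_le (one_le_two.trans (h.two_le i)) (neg_le_neg hs)

lemma rpow_neg_le_half (h : IsBeurlingPrimeSystem N Z ρ) (hs : 1 ≤ s) (i : ι) :
    N i ^ (-s) ≤ 1 / 2 :=
  (h.rpow_neg_le_inv hs i).trans (by rw [one_div]; exact inv_anti₀ two_pos (h.two_le i))

lemma one_le_zeta (h : IsBeurlingPrimeSystem N Z ρ) (hs : 1 < s) : 1 ≤ Z s := by
  refine ge_of_tendsto' (h.hasProd s hs) fun S => Finset.one_le_prod fun i _ => ?_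
  have hle := h.rpow_neg_le_half hs.le i
  exact (one_le_inv₀ (by linarith)).2 (sub_le_self _ (rpow_nonneg (h.pos i).le _))

lemma hasSum_log (h : IsBeurlingPrimeSystem N Z ρ) (hs : 1 < s) :
    HasSum (fun i => -log (1 - N i ^ (-s))) (log (Z s)) := by
  have hne : ∀ i, (1 - N i ^ (-s))⁻¹ ≠ 0 := fun i =>
    inv_ne_zero (by linarith [h.rpow_neg_le_half hs.le i])
  have hZ : Z s ≠ 0 := (one_pos.trans_le (h.one_le_zeta hs)).ne'
  simpa only [log_inv] using hasSum_log_of_hasProd hne hZ (h.hasProd s hs)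

lemma summable_rpow (h : IsBeurlingPrimeSystem N Z ρ) (hs : 1 < s) :
    Summable fun i => N i ^ (-s) := by
  refine .of_nonneg_of_le (fun i => rpow_nonneg (h.pos i).le _) (fun i => ?_)
    (h.hasSum_log hs).summable
  have hlog := log_le_sub_one_of_pos
    (show 0 < 1 - N i ^ (-s) by linarith [h.rpow_neg_le_half hs.le i])
  linarith

lemma abs_log_add_le (h : IsBeurlingPrimeSystem N Z ρ) (hs : 1 ≤ s) (i : ι) :
    |log (1 - N i ^ (-s)) + N i ^ (-s)| ≤ 2 * N i ^ (-2 : ℝ) := by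
  refine (abs_log_one_sub_add_le (h.rpow_neg_le_half hs i)).trans ?_
  have hsq := pow_le_pow_left₀ (rpow_nonneg (h.pos i).le _) (h.rpow_neg_le_inv hs i) 2
  rw [inv_pow, ← rpow_two (N i), ← rpow_neg (h.pos i).le] at hsq
  exact mul_le_mul_of_nonneg_left hsq two_pos.le

lemma summable_log_add (h : IsBeurlingPrimeSystem N Z ρ) (hs : 1 ≤ s) :
    Summable fun i => log (1 - N i ^ (-s)) + N i ^ (-s) :=
  .of_norm_bounded ((h.summable_rpow one_lt_two).mul_left 2) (h.abs_log_add_le hs)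

lemma tendsto_tsum_log_add (h : IsBeurlingPrimeSystem N Z ρ) :
    Tendsto (fun s : ℝ => ∑' i, (log (1 - N i ^ (-s)) + N i ^ (-s))) (𝓝[>] 1)
      (𝓝 (mertensConstant N)) := by
  refine tendsto_tsum_of_dominated_convergence ((h.summable_rpow one_lt_two).mul_left 2)
    (fun i => ?_) ?_
  · have hpow : Tendsto (fun s : ℝ => N i ^ (-s)) (𝓝[>] 1) (𝓝 (N i)⁻¹) := by
      rw [← rpow_neg_one]
      exact (((continuous_const_rpow (h.pos i).ne').comp continuous_neg).tendsto 1).mono_left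
        nhdsWithin_le_nhds
    have hne : 1 - (N i)⁻¹ ≠ 0 := by
      rw [← rpow_neg_one]; linarith [h.rpow_neg_le_half le_rfl i]
    exact ((hpow.const_sub 1).log hne).add hpow
  · filter_upwards [self_mem_nhdsWithin] with s hs using h.abs_log_add_le (le_of_lt hs)

lemma inv_mul_exp_eq_rpow (h : IsBeurlingPrimeSystem N Z ρ) (δ : ℝ) (i : ι) :
    (N i)⁻¹ * exp (-(δ * log (N i))) = N i ^ (-(1 + δ)) := by
  rw [neg_add, rpow_add (h.pos i), rpow_neg_one, rpow_def_of_pos (h.pos i)]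
  ring_nf

lemma laplaceSum_eq (h : IsBeurlingPrimeSystem N Z ρ) {δ : ℝ} (hδ : 0 < δ) :
    laplaceSum (fun i => (N i)⁻¹) (fun i => log (N i)) δ =
      log (Z (1 + δ)) + ∑' i, (log (1 - N i ^ (-(1 + δ))) + N i ^ (-(1 + δ))) := by
  have hs : 1 < 1 + δ := lt_add_of_pos_right 1 hδ
  simp only [laplaceSum, h.inv_mul_exp_eq_rpow]
  rw [← (h.hasSum_log hs).tsum_eq, ← (h.hasSum_log hs).summable.tsum_add (h.summable_log_add hs.le)]
  simp only [neg_add_cancel_left]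

theorem hasLogLaplaceTransform (h : IsBeurlingPrimeSystem N Z ρ) :
    HasLogLaplaceTransform (fun i => (N i)⁻¹) (fun i => log (N i))
      (log ρ + mertensConstant N) where
  weight_nonneg i := inv_nonneg.2 (h.pos i).le
  point_nonneg i := log_nonneg (one_le_two.trans (h.two_le i))
  summable δ hδ := by
    simpa only [h.inv_mul_exp_eq_rpow] using h.summable_rpow (lt_add_of_pos_right 1 hδ)
  tendsto := by
    have hshift : Tendsto (fun δ : ℝ => 1 + δ) (𝓝[>] 0) (𝓝[>] 1) := by
      refine tendsto_nhdsWithin_iff.2 ⟨tendsto_nhdsWithin_of_tendsto_nhds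
        ((continuous_const.add continuous_id).tendsto' 0 1 (add_zero 1)), ?_⟩
      filter_upwards [self_mem_nhdsWithin] with δ (hδ : 0 < δ) using lt_add_of_pos_right 1 hδ
    refine (((h.tendsto.log h.residue_pos.ne').add h.tendsto_tsum_log_add).comp hshift).congr' ?_
    filter_upwards [self_mem_nhdsWithin] with δ (hδ : 0 < δ)
    have hZ : Z (1 + δ) ≠ 0 :=
      (one_pos.trans_le (h.one_le_zeta (lt_add_of_pos_right 1 hδ))).ne'
    rw [Function.comp_apply, add_sub_cancel_left, log_mul hδ.ne' hZ, h.laplaceSum_eq hδ]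
    ring

theorem tendsto_cumulativeSum_inv (h : IsBeurlingPrimeSystem N Z ρ) :
    Tendsto (fun x => cumulativeSum (fun i => (N i)⁻¹) N x - log (log x)) atTop
      (𝓝 (log ρ + mertensConstant N + eulerMascheroniConstant)) := by
  refine (h.hasLogLaplaceTransform.tendsto_cumulativeSum_sub_log.comp tendsto_log_atTop).congr' ?_
  filter_upwards [eventually_gt_atTop 0] with x hx
  simp only [Function.comp_apply, cumulativeSum, log_le_log_iff (h.pos _) hx]

end IsBeurlingPrimeSystem

end BeurlingPrimes

section PrimeProducts

open Real Set Topology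

variable {ι : Type*}

lemma cumulativeSum_add {a b t : ι → ℝ} {T : ℝ} (h : {i | t i ≤ T}.Finite) :
    cumulativeSum (fun i => a i + b i) t T = cumulativeSum a t T + cumulativeSum b t T := by
  have hsummable : ∀ c : ι → ℝ, Summable fun i => if t i ≤ T then c i else 0 := fun c =>
    summable_of_hasFiniteSupport (h.subset fun i hi => of_not_not fun hT => hi (if_neg hT))
  rw [cumulativeSum, cumulativeSum, cumulativeSum, ← (hsummable a).tsum_add (hsummable b)]
  refine tsum_congr fun i => ?_
  split_ifs
  exacts [rfl, (add_zero 0).symm]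

lemma tendsto_cumulativeSum_of_hasSum {a : ι → ℝ} {S : ℝ} (t : ι → ℝ) (h : HasSum a S) :
    Tendsto (cumulativeSum a t) atTop (𝓝 S) := by
  rw [← h.tsum_eq]
  refine tendsto_tsum_of_dominated_convergence h.summable.norm (fun i => ?_)
    (.of_forall fun T i => ?_)
  · refine tendsto_const_nhds.congr' ?_
    filter_upwards [eventually_ge_atTop (t i)] with T hT
    rw [if_pos hT]
  · split_ifs
    exacts [le_rfl, norm_zero.trans_le (norm_nonneg _)]

lemma tendsto_coe_primes_cofinite : Tendsto (fun p : Nat.Primes => (p : ℝ)) cofinite atTop := by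
  have hcoe : Tendsto (fun p : Nat.Primes => (p : ℕ)) cofinite cofinite :=
    Nat.Primes.coe_nat_injective.tendsto_cofinite
  rw [Nat.cofinite_eq_atTop] at hcoe
  exact tendsto_natCast_atTop_atTop.comp hcoe

lemma cumulativeSum_primes_eq_sum (g : ℕ → ℝ) (x : ℝ) :
    cumulativeSum (fun p : Nat.Primes => g p) (fun p => (p : ℝ)) x =
      ∑ p ∈ (Finset.range (⌊x⌋₊ + 1)).filter Nat.Prime, g p := by
  set S := (Finset.range (⌊x⌋₊ + 1)).filter Nat.Prime with hS
  have hle : ∀ p : Nat.Primes, (p : ℝ) ≤ x ↔ (p : ℕ) ∈ S := fun p => by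
    rw [hS, Finset.mem_filter, Finset.mem_range_succ_iff, Nat.le_floor_iff' p.2.ne_zero,
      and_iff_left p.2]
  have hsupport : Function.support (fun n => if n ∈ S then g n else 0) ⊆
      range ((↑) : Nat.Primes → ℕ) := fun n hn =>
    ⟨⟨n, (Finset.mem_filter.1 (of_not_not fun h => hn (if_neg h))).2⟩, rfl⟩
  simp only [cumulativeSum, hle]
  calc _ = ∑' n, if n ∈ S then g n else 0 := Nat.Primes.coe_nat_injective.tsum_eq hsupport
    _ = ∑ n ∈ S, if n ∈ S then g n else 0 := tsum_eq_sum fun n hn => if_neg hn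
    _ = ∑ n ∈ S, g n := Finset.sum_congr rfl fun n hn => if_pos hn

lemma tendsto_log_mul_prod_primes {u g : ℕ → ℝ} {M S : ℝ} (hu : ∀ p : ℕ, p.Prime → 0 < u p)
    (hg : Tendsto (fun x => cumulativeSum (fun p : Nat.Primes => g p) (fun p => (p : ℝ)) x -
      log (log x)) atTop (𝓝 M))
    (hS : HasSum (fun p : Nat.Primes => log (u p) + g p) S) :
    Tendsto (fun x => log x * ∏ p ∈ (Finset.range (⌊x⌋₊ + 1)).filter Nat.Prime, u p) atTop
      (𝓝 (exp (S - M))) := by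
  have hlim := (tendsto_cumulativeSum_of_hasSum (fun p : Nat.Primes => (p : ℝ)) hS).sub hg
  refine ((continuous_exp.tendsto _).comp hlim).congr' ?_
  filter_upwards [eventually_gt_atTop 1] with x hx
  have hpos : ∀ p ∈ (Finset.range (⌊x⌋₊ + 1)).filter Nat.Prime, 0 < u p := fun p hp =>
    hu p (Finset.mem_filter.1 hp).2
  rw [Function.comp_apply, cumulativeSum_primes_eq_sum (fun p => log (u p) + g p),
    cumulativeSum_primes_eq_sum, Finset.sum_add_distrib, ← log_prod fun p hp => (hpos p hp).ne']
  rw [sub_sub_eq_add_sub, add_right_comm, add_sub_cancel_right, exp_add,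
    exp_log (Finset.prod_pos hpos), exp_log (log_pos hx), mul_comm]

lemma isBeurlingPrimeSystem_primes :
    IsBeurlingPrimeSystem (fun p : Nat.Primes => (p : ℝ))
      (fun s => ∑' n : ℕ, (n : ℝ) ^ (-s)) 1 where
  two_le p := by exact_mod_cast p.2.two_le
  hasProd s hs := by
    let f : ℕ →*₀ ℝ :=
      { toFun n := (n : ℝ) ^ (-s)
        map_zero' := by simp [show s ≠ 0 by linarith]
        map_one' := by simp
        map_mul' m n := by simp [mul_rpow] }
    have hf : Summable fun n => ‖f n‖ := (summable_nat_rpow.2 (neg_lt_neg hs)).norm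
    have hprod := EulerProduct.eulerProduct_completely_multiplicative_hasProd hf
    exact hprod
  residue_pos := one_pos
  tendsto := by simpa [rpow_neg] using tendsto_sub_mul_tsum_nat_rpow

theorem tendsto_log_mul_prod_one_sub_inv :
    Tendsto (fun x => log x * ∏ p ∈ (Finset.range (⌊x⌋₊ + 1)).filter Nat.Prime, (1 - (p : ℝ)⁻¹))
      atTop (𝓝 (exp (-eulerMascheroniConstant))) := by
  have hsum := (isBeurlingPrimeSystem_primes.summable_log_add le_rfl).hasSum
  have hsecond := isBeurlingPrimeSystem_primes.tendsto_cumulativeSum_inv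
  simp only [rpow_neg_one] at hsum
  convert tendsto_log_mul_prod_primes (u := fun p => 1 - (p : ℝ)⁻¹) (g := fun p => (p : ℝ)⁻¹)
    (fun p hp => sub_pos.2 (inv_lt_one_of_one_lt₀ (by exact_mod_cast hp.one_lt))) hsecond hsum
    using 3
  rw [mertensConstant, log_one]
  ring

lemma abs_log_one_sub_div_sub_one_add_le {c n x : ℝ} (hc : 0 ≤ c) (hcn : c ≤ n) (hx : 2 ≤ x)
    (hnx : 4 * n ≤ x) : |log (1 - c / (x - 1)) + c / x| ≤ (8 * n ^ 2 + 2 * n) * (x ^ 2)⁻¹ := by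
  have hx0 : 0 < x := by linarith
  have hx1 : 0 < x - 1 := by linarith
  have hy0 : 0 ≤ c / (x - 1) := div_nonneg hc hx1.le
  have hy : c / (x - 1) ≤ 2 * n / x := by
    rw [div_le_div_iff₀ hx1 hx0]
    nlinarith
  have hhalf : 2 * n / x ≤ 1 / 2 := by
    rw [div_le_div_iff₀ hx0 two_pos]
    linarith
  have hlog := abs_log_one_sub_add_le (hy.trans hhalf)
  have hsq : (c / (x - 1)) ^ 2 ≤ (2 * n / x) ^ 2 := pow_le_pow_left₀ hy0 hy 2
  have hdiff : c / (x - 1) - c / x = c / (x - 1) / x := by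
    field_simp
    ring
  have hdiff_le : c / (x - 1) / x ≤ 2 * n / x / x := div_le_div_of_nonneg_right hy hx0.le
  have hdiff_nonneg : 0 ≤ c / (x - 1) / x := div_nonneg hy0 hx0.le
  calc |log (1 - c / (x - 1)) + c / x| ≤ 2 * (2 * n / x) ^ 2 + 2 * n / x / x := by
        rw [abs_le] at hlog ⊢
        constructor <;> linarith
    _ = (8 * n ^ 2 + 2 * n) * (x ^ 2)⁻¹ := by
        field_simp
        ring

lemma summable_log_one_sub_div_sub_one_add {c : Nat.Primes → ℝ} {n : ℝ} (hc : ∀ p, 0 ≤ c p)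
    (hcn : ∀ p, c p ≤ n) :
    Summable fun p : Nat.Primes => log (1 - c p / ((p : ℝ) - 1)) + c p / p := by
  have hsum : Summable fun p : Nat.Primes => (8 * n ^ 2 + 2 * n) * ((p : ℝ) ^ 2)⁻¹ :=
    ((summable_nat_pow_inv.2 one_lt_two).comp_injective Nat.Primes.coe_nat_injective).mul_left _
  refine .of_norm_bounded_eventually hsum ?_
  filter_upwards [tendsto_coe_primes_cofinite.eventually_ge_atTop (4 * n)] with p hp
  exact abs_log_one_sub_div_sub_one_add_le (hc p) (hcn p) (by exact_mod_cast p.2.two_le) hp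

end PrimeProducts

section EulerProduct

open Topology

variable {α F : Type*} [CommMonoidWithZero α] [UniqueFactorizationMonoid α] [Subsingleton αˣ]
  [NormedField F] [CompleteSpace F] {f : α →*₀ F}

/-- The elements divisible by none of the primes in `S`, as left over by the sieve of
Eratosthenes. -/
def siftedSet (S : Finset {p : α // Prime p}) : Set α :=
  {a | ∀ q ∈ S, ¬ (q : α) ∣ a}

lemma prime_dvd_prime_mul_iff {p q : {p : α // Prime p}} (hpq : q ≠ p) (a : α) :
    (q : α) ∣ p * a ↔ (q : α) ∣ a := by
  refine ⟨fun h => (q.2.dvd_or_dvd h).resolve_left fun h' => hpq (Subtype.ext ?_),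
    fun h => h.mul_left _⟩
  exact associated_iff_eq.1 ((q.2.dvd_prime_iff_associated p.2).1 h')

open scoped Classical in
lemma siftedSet_eq_union {p : {p : α // Prime p}} {S : Finset {p : α // Prime p}} (hp : p ∉ S) :
    siftedSet S = siftedSet (insert p S) ∪ ((p : α) * ·) '' siftedSet S := by
  have hmul : ∀ a, (p : α) * a ∈ siftedSet S ↔ a ∈ siftedSet S := fun a =>
    forall₂_congr fun q hq => not_congr (prime_dvd_prime_mul_iff (ne_of_mem_of_not_mem hq hp) a)
  ext a
  constructor
  · intro ha
    by_cases hpa : (p : α) ∣ a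
    · obtain ⟨b, rfl⟩ := hpa
      exact .inr ⟨b, (hmul b).1 ha, rfl⟩
    · exact .inl (Finset.forall_mem_insert _ _ _ |>.2 ⟨hpa, ha⟩)
  · rintro (ha | ⟨b, hb, rfl⟩)
    · exact fun q hq => ha q (Finset.mem_insert_of_mem hq)
    · exact (hmul b).2 hb

open scoped Classical in
lemma tsum_siftedSet_insert (hf : Summable fun a => ‖f a‖) {p : {p : α // Prime p}}
    {S : Finset {p : α // Prime p}} (hp : p ∉ S) :
    ∑' a : siftedSet (insert p S), f a = (1 - f p) * ∑' a : siftedSet S, f a := by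
  have hdisjoint : Disjoint (siftedSet (insert p S)) (((p : α) * ·) '' siftedSet S) :=
    Set.disjoint_left.2 fun a ha ⟨b, _, hb⟩ => ha p (Finset.mem_insert_self p S) ⟨b, hb.symm⟩
  have hsplit : ∑' a : siftedSet S, f a =
      ∑' a : siftedSet (insert p S), f a + f p * ∑' a : siftedSet S, f a := by
    conv_lhs => rw [siftedSet_eq_union hp]
    rw [Summable.tsum_union_disjoint hdisjoint (hf.of_norm.subtype _) (hf.of_norm.subtype _),
      tsum_image f (mul_right_injective₀ p.2.ne_zero).injOn, ← tsum_mul_left]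
    simp only [map_mul]
  linear_combination -hsplit

lemma tsum_siftedSet (hf : Summable fun a => ‖f a‖) (S : Finset {p : α // Prime p}) :
    ∑' a : siftedSet S, f a = (∏ p ∈ S, (1 - f p)) * ∑' a, f a := by
  classical
  induction S using Finset.induction_on with
  | empty =>
    have huniv : siftedSet (∅ : Finset {p : α // Prime p}) = Set.univ := by simp [siftedSet]
    rw [huniv, tsum_univ, Finset.prod_empty, one_mul]
  | insert p S hp ih => rw [tsum_siftedSet_insert hf hp, ih, Finset.prod_insert hp, mul_assoc]

lemma tendsto_tsum_siftedSet (hf : Summable fun a => ‖f a‖) :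
    Tendsto (fun S : Finset {p : α // Prime p} => ∑' a : siftedSet S, f a) atTop (𝓝 1) := by
  have hone : ∑' a, ({1} : Set α).indicator f a = 1 := by
    rw [← tsum_subtype, tsum_singleton, map_one]
  rw [← hone]
  simp only [tsum_subtype]
  refine tendsto_tsum_of_dominated_convergence hf (fun a => tendsto_const_nhds.congr' ?_)
    (.of_forall fun S a => norm_indicator_le_norm_self f a)
  rcases eq_or_ne a 1 with rfl | ha1
  · refine .of_forall fun S => ?_
    have hmem : (1 : α) ∈ siftedSet S := fun q _ h => q.2.not_isUnit (isUnit_of_dvd_one h)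
    simp only [hmem, Set.mem_singleton, Set.indicator_of_mem]
  rcases eq_or_ne a 0 with rfl | ha0
  · have hzero : ∀ A : Set α, A.indicator f 0 = 0 := fun A =>
      Set.indicator_apply_eq_zero.2 fun _ => map_zero f
    simp only [hzero, EventuallyEq.rfl]
  obtain ⟨q, hq, hqa⟩ := WfDvdMonoid.exists_irreducible_factor (mt isUnit_iff_eq_one.1 ha1) ha0
  have hq' : Prime q := UniqueFactorizationMonoid.irreducible_iff_prime.1 hq
  filter_upwards [eventually_ge_atTop {(⟨q, hq'⟩ : {p : α // Prime p})}] with S hS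
  have hnot : a ∉ siftedSet S := fun h => h ⟨q, hq'⟩ (Finset.singleton_subset_iff.1 hS) hqa
  rw [Set.indicator_of_notMem (mt Set.mem_singleton_iff.1 ha1), Set.indicator_of_notMem hnot]

theorem hasProd_inv_one_sub_prime (hf : Summable fun a => ‖f a‖) :
    HasProd (fun p : {p : α // Prime p} => (1 - f p)⁻¹) (∑' a, f a) := by
  have hlim := tendsto_tsum_siftedSet hf
  simp only [tsum_siftedSet hf] at hlim
  have hne : ∑' a, f a ≠ 0 := fun h => by
    simp only [h, mul_zero] at hlim
    exact zero_ne_one (tendsto_nhds_unique tendsto_const_nhds hlim)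
  have hprod : HasProd (fun p : {p : α // Prime p} => 1 - f p) (∑' a, f a)⁻¹ := by
    have hdiv := hlim.mul_const (∑' a, f a)⁻¹
    simpa only [mul_inv_cancel_right₀ hne, one_mul, HasProd,
      SummationFilter.unconditional_filter] using hdiv
  simpa only [inv_inv] using hprod.inv₀ (inv_ne_zero hne)

end EulerProduct

section FiniteFibers

variable {ι κ : Type*} {π : ι → κ} {g : κ → ℝ}

lemma summable_comp_iff_of_finite_fibers [∀ k, Finite {i // π i = k}] (hg : ∀ k, 0 ≤ g k) :
    Summable (fun i => g (π i)) ↔ Summable fun k => Nat.card {i // π i = k} * g k := by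
  have hfiber : ∀ k, (fun i : {i // π i = k} => g (π i)) = fun _ => g k := fun k =>
    funext fun i => by rw [i.2]
  have hnonneg : 0 ≤ (fun i => g (π i)) ∘ Equiv.sigmaFiberEquiv π := fun i => hg _
  rw [← (Equiv.sigmaFiberEquiv π).summable_iff, summable_sigma_of_nonneg hnonneg]
  simp only [Function.comp_apply, Equiv.sigmaFiberEquiv_apply, hfiber, tsum_const, nsmul_eq_mul]
  exact and_iff_right fun k => .of_finite

lemma tsum_comp_eq_tsum_card_mul (h : Summable fun i => g (π i)) :
    ∑' i, g (π i) = ∑' k, Nat.card {i // π i = k} * g k := by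
  rw [← (h.hasSum.tsum_fiberwise π).tsum_eq]
  refine tsum_congr fun k => ?_
  have hfiber : (fun i : π ⁻¹' {k} => g (π i)) = fun _ => g k := funext fun i => by rw [i.2]
  rw [hfiber, tsum_const, nsmul_eq_mul]
  rfl

end FiniteFibers

section DedekindZeta

open NumberField Ideal Topology

variable (K : Type*) [Field K] [NumberField K] {s : ℝ}

/-- The number of ideals of norm `n` in the ring of integers of `K`. For `n = 0` this counts the
zero ideal. -/
noncomputable def idealCount (n : ℕ) : ℕ := Nat.card {I : Ideal (𝓞 K) // absNorm I = n}

lemma dedekindZeta_eq_lSeries_idealCount :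
    dedekindZeta K = LSeries (fun n => idealCount K n) := rfl

lemma term_idealCount (hs : 0 < s) (n : ℕ) :
    LSeries.term (fun n => idealCount K n) s n =
      (((idealCount K n : ℝ) * (n : ℝ) ^ (-s) : ℝ) : ℂ) := by
  rcases eq_or_ne n 0 with rfl | hn
  · simp [Real.zero_rpow (neg_ne_zero.2 hs.ne')]
  · rw [LSeries.term_of_ne_zero hn, Real.rpow_neg n.cast_nonneg, ← div_eq_mul_inv]
    push_cast [Complex.ofReal_cpow n.cast_nonneg]
    rfl

lemma lSeriesSummable_idealCount (hs : 1 < s) :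
    LSeriesSummable (fun n => idealCount K n) s := by
  have hne : ∀ᶠ z : ℝ in 𝓝[>] 1, ((z : ℂ) - 1) * dedekindZeta K z ≠ 0 :=
    (tendsto_sub_one_mul_dedekindZeta_nhdsGT K).eventually_ne
      (Complex.ofReal_ne_zero.2 (dedekindZeta_residue_ne_zero K))
  obtain ⟨z, hz, hzs⟩ := (hne.and (Ioo_mem_nhdsGT hs)).exists
  -- A divergent series would have the junk value `0`, against the nonzero residue at `1`.
  have hsummable : LSeriesSummable (fun n => idealCount K n) z :=
    of_not_not fun h => hz (by rw [dedekindZeta_eq_lSeries_idealCount,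
      LSeries.eq_zero_of_not_LSeriesSummable _ _ h, mul_zero])
  exact hsummable.of_re_le_re (by simpa using hzs.2.le)

instance finite_absNorm_eq (n : ℕ) : Finite {I : Ideal (𝓞 K) // absNorm I = n} :=
  finite_setOfPred_absNorm_eq n

lemma summable_absNorm_rpow (hs : 1 < s) :
    Summable fun I : Ideal (𝓞 K) => (absNorm I : ℝ) ^ (-s) := by
  refine (summable_comp_iff_of_finite_fibers (g := fun n : ℕ => (n : ℝ) ^ (-s))
    fun n => by positivity).2 ?_
  exact Complex.summable_ofReal.1 <| (lSeriesSummable_idealCount K hs).congr fun n =>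
    term_idealCount K (one_pos.trans hs) n

lemma tsum_absNorm_rpow_eq_dedekindZeta (hs : 1 < s) :
    ((∑' I : Ideal (𝓞 K), (absNorm I : ℝ) ^ (-s) : ℝ) : ℂ) = dedekindZeta K s := by
  rw [tsum_comp_eq_tsum_card_mul (g := fun n : ℕ => (n : ℝ) ^ (-s)) (summable_absNorm_rpow K hs),
    Complex.ofReal_tsum, dedekindZeta_eq_lSeries_idealCount, LSeries]
  exact tsum_congr fun n => (term_idealCount K (one_pos.trans hs) n).symm

theorem isBeurlingPrimeSystem_absNorm :
    IsBeurlingPrimeSystem (fun P : {P : Ideal (𝓞 K) // Prime P} => (absNorm P.1 : ℝ))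
      (fun s => ∑' I : Ideal (𝓞 K), (absNorm I : ℝ) ^ (-s)) (dedekindZeta_residue K) where
  two_le P := by
    have hne_zero : absNorm P.1 ≠ 0 := mt absNorm_eq_zero_iff.1 P.2.ne_zero
    have hne_one : absNorm P.1 ≠ 1 := fun h =>
      P.2.not_isUnit (isUnit_iff.2 (absNorm_eq_one_iff.1 h))
    exact_mod_cast (Nat.two_le_iff _).2 ⟨hne_zero, hne_one⟩
  hasProd s hs := by
    let f : Ideal (𝓞 K) →*₀ ℝ :=
      { toFun I := (absNorm I : ℝ) ^ (-s)
        map_zero' := by simp [show s ≠ 0 by linarith]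
        map_one' := by simp
        map_mul' I J := by simp [Real.mul_rpow] }
    have hf : Summable fun I => ‖f I‖ := (summable_absNorm_rpow K hs).norm
    exact hasProd_inv_one_sub_prime hf
  residue_pos := dedekindZeta_residue_pos K
  tendsto := by
    refine (Complex.continuous_re.tendsto _).comp
      (tendsto_sub_one_mul_dedekindZeta_nhdsGT K) |>.congr' ?_
    filter_upwards [self_mem_nhdsWithin] with s hs
    rw [Function.comp_apply, ← tsum_absNorm_rpow_eq_dedekindZeta K hs]
    norm_cast

end DedekindZeta

section DegreeOnePrimes

open NumberField Ideal Real Topology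

lemma card_primesOver_le_finrank {R : Type*} [CommRing R] [IsDomain R] (p : Ideal R) [p.IsPrime]
    (S : Type*) [CommRing S] [Algebra R S] [Module.Finite R S] [Module.Flat R S] :
    Nat.card (p.primesOver S) ≤ Module.finrank R S := by
  have := (Algebra.QuasiFinite.finite_primesOver (S := S) p).fintype
  rw [← sum_ramification_inertia_eq_finrank p S, Nat.card_eq_fintype_card, Fintype.card,
    Finset.card_eq_sum_ones]
  exact Finset.sum_le_sum fun q _ => Nat.one_le_iff_ne_zero.2
    (mul_pos (ramificationIdx_pos q.1 R) (inertiaDeg_pos q.1 R)).ne'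

variable (K : Type*) [Field K] [NumberField K]

lemma card_primesOver_prime_le_finrank (p : Nat.Primes) :
    Nat.card ((span {((p : ℕ) : ℤ)}).primesOver (𝓞 K)) ≤ Module.finrank ℚ K := by
  have : Fact (p : ℕ).Prime := ⟨p.2⟩
  rw [← RingOfIntegers.rank]
  exact card_primesOver_le_finrank _ _

lemma finite_absNorm_le (x : ℝ) : {I : Ideal (𝓞 K) | (absNorm I : ℝ) ≤ x}.Finite :=
  (finite_setOfPred_absNorm_le ⌊x⌋₊).subset fun _ hI => Nat.le_floor hI

lemma idealCount_prime_le_finrank (p : Nat.Primes) : idealCount K p ≤ Module.finrank ℚ K := by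
  have : Fact (p : ℕ).Prime := ⟨p.2⟩
  have hprime : ∀ I : {I : Ideal (𝓞 K) // absNorm I = p}, (absNorm I.1).Prime := fun I =>
    I.2.symm ▸ p.2
  refine le_trans ?_ (card_primesOver_prime_le_finrank K p)
  refine Nat.card_le_card_of_injective
    (fun I => ⟨I.1, isPrime_of_irreducible_absNorm (hprime I), ⟨?_⟩⟩)
    fun I J h => Subtype.ext (congrArg (fun P => P.1) h)
  rw [under_def, ← span_singleton_absNorm (hprime I), I.2]

variable {K}

/-- The residue characteristic of a nonzero prime ideal: the rational prime lying below it. -/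
noncomputable def residueChar (P : {P : Ideal (𝓞 K) // Prime P}) : Nat.Primes :=
  have := isPrime_of_prime P.2
  have : NeZero P.1 := ⟨P.2.ne_zero⟩
  ⟨absNorm (under ℤ P.1), Nat.absNorm_under_prime P.1⟩

lemma exists_absNorm_eq_residueChar_pow (P : {P : Ideal (𝓞 K) // Prime P}) :
    ∃ k, absNorm P.1 = (residueChar P : ℕ) ^ k :=
  have := isPrime_of_prime P.2
  ⟨_, (pow_inertiaDeg (absNorm (under ℤ P.1)) P.1).symm⟩

lemma liesOver_residueChar (P : {P : Ideal (𝓞 K) // Prime P}) :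
    P.1.LiesOver (span {((residueChar P : ℕ) : ℤ)}) :=
  Int.liesOver_span_absNorm P.1

lemma injective_residueChar_fiber (p : Nat.Primes) : Function.Injective
    fun P : {P : {P : Ideal (𝓞 K) // Prime P} // residueChar P = p} =>
      (⟨P.1.1, isPrime_of_prime P.1.2, by simpa only [P.2] using liesOver_residueChar P.1⟩ :
        (span {((p : ℕ) : ℤ)}).primesOver (𝓞 K)) :=
  fun _ _ h => Subtype.ext (Subtype.ext (congrArg (fun P => P.1) h))

instance finite_residueChar_eq (p : Nat.Primes) :
    Finite {P : {P : Ideal (𝓞 K) // Prime P} // residueChar P = p} :=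
  have : Fact (p : ℕ).Prime := ⟨p.2⟩
  .of_injective _ (injective_residueChar_fiber p)

lemma card_residueChar_eq_le_finrank (p : Nat.Primes) :
    Nat.card {P : {P : Ideal (𝓞 K) // Prime P} // residueChar P = p} ≤ Module.finrank ℚ K := by
  have : Fact (p : ℕ).Prime := ⟨p.2⟩
  exact (Nat.card_le_card_of_injective _ (injective_residueChar_fiber p)).trans
    (card_primesOver_prime_le_finrank K p)

lemma summable_residueChar_sq_inv :
    Summable fun P : {P : Ideal (𝓞 K) // Prime P} => ((residueChar P : ℝ) ^ 2)⁻¹ := by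
  refine (summable_comp_iff_of_finite_fibers (g := fun p : Nat.Primes => ((p : ℝ) ^ 2)⁻¹)
    fun p => by positivity).2 ?_
  have hprimes : Summable fun p : Nat.Primes => ((p : ℝ) ^ 2)⁻¹ :=
    (Real.summable_nat_pow_inv.2 one_lt_two).comp_injective Nat.Primes.coe_nat_injective
  refine .of_nonneg_of_le (fun p => by positivity) (fun p => ?_)
    (hprimes.mul_left (Module.finrank ℚ K : ℝ))
  gcongr
  exact card_residueChar_eq_le_finrank p

lemma residueChar_sq_le_absNorm {P : {P : Ideal (𝓞 K) // Prime P}} (hP : ¬ (absNorm P.1).Prime) :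
    (residueChar P : ℕ) ^ 2 ≤ absNorm P.1 := by
  obtain ⟨k, hk⟩ := exists_absNorm_eq_residueChar_pow P
  rw [hk] at hP ⊢
  have hk_zero : k ≠ 0 := by
    rintro rfl
    exact P.2.not_isUnit (isUnit_iff.2 (absNorm_eq_one_iff.1 (hk.trans (pow_zero _))))
  have hk_one : k ≠ 1 := by
    rintro rfl
    exact hP ((pow_one (residueChar P : ℕ)).symm ▸ (residueChar P).2)
  exact Nat.pow_le_pow_right (residueChar P).2.pos (by lia)

lemma summable_inv_absNorm_of_not_prime :
    Summable fun P : {P : Ideal (𝓞 K) // Prime P} =>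
      if (absNorm P.1).Prime then 0 else (absNorm P.1 : ℝ)⁻¹ := by
  refine .of_nonneg_of_le (fun P => by positivity) (fun P => ?_) summable_residueChar_sq_inv
  split_ifs with hP
  · positivity
  · have hpos : 0 < (residueChar P : ℝ) := Nat.cast_pos.2 (residueChar P).2.pos
    gcongr
    exact_mod_cast residueChar_sq_le_absNorm hP

variable (K)

lemma cumulativeSum_idealCount_div (x : ℝ) :
    cumulativeSum (fun p : Nat.Primes => (idealCount K p : ℝ) / p) (fun p => (p : ℝ)) x =
      cumulativeSum (fun P : {P : Ideal (𝓞 K) // Prime P} =>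
        if (absNorm P.1).Prime then (absNorm P.1 : ℝ)⁻¹ else 0) (fun P => (absNorm P.1 : ℝ)) x := by
  let g : ℕ → ℝ := fun n => if (n : ℝ) ≤ x then if n.Prime then (n : ℝ)⁻¹ else 0 else 0
  have hg : ∀ n, g n ≠ 0 → n.Prime := fun n hn => of_not_not fun h => hn (by simp [g, h])
  have hsummable : Summable fun I : Ideal (𝓞 K) => g (absNorm I) :=
    summable_of_hasFiniteSupport <| (finite_absNorm_le K x).subset fun I hI =>
      of_not_not fun h => hI (if_neg h)
  symm
  calc ∑' P : {P : Ideal (𝓞 K) // Prime P}, g (absNorm P.1)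
    _ = ∑' I : Ideal (𝓞 K), g (absNorm I) :=
      Subtype.val_injective.tsum_eq (f := fun I : Ideal (𝓞 K) => g (absNorm I))
        fun I hI => ⟨⟨I, ?_⟩, rfl⟩
    _ = ∑' n, idealCount K n * g n := tsum_comp_eq_tsum_card_mul hsummable
    _ = ∑' p : Nat.Primes, idealCount K p * g p :=
      (Nat.Primes.coe_nat_injective.tsum_eq fun n hn =>
        ⟨⟨n, hg n (right_ne_zero_of_mul hn)⟩, rfl⟩).symm
    _ = _ := tsum_congr fun p => ?_
  · exact UniqueFactorizationMonoid.irreducible_iff_prime.1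
      (irreducible_of_irreducible_absNorm (hg _ hI))
  · simp only [g, p.2, if_true, mul_ite, mul_zero, div_eq_mul_inv]

theorem exists_tendsto_cumulativeSum_idealCount_div :
    ∃ M, Tendsto (fun x => cumulativeSum (fun p : Nat.Primes => (idealCount K p : ℝ) / p)
      (fun p => (p : ℝ)) x - log (log x)) atTop (𝓝 M) := by
  have hfinite (x : ℝ) : {P : {P : Ideal (𝓞 K) // Prime P} | (absNorm P.1 : ℝ) ≤ x}.Finite :=
    (finite_absNorm_le K x).preimage Subtype.val_injective.injOn
  have htotal := (isBeurlingPrimeSystem_absNorm K).tendsto_cumulativeSum_inv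
  have hrest := tendsto_cumulativeSum_of_hasSum
    (fun P : {P : Ideal (𝓞 K) // Prime P} => (absNorm P.1 : ℝ))
    summable_inv_absNorm_of_not_prime.hasSum
  refine ⟨_, (htotal.sub hrest).congr fun x => ?_⟩
  have hsplit := cumulativeSum_add (hfinite x)
    (a := fun P => if (absNorm P.1).Prime then (absNorm P.1 : ℝ)⁻¹ else 0)
    (b := fun P => if (absNorm P.1).Prime then 0 else (absNorm P.1 : ℝ)⁻¹)
  simp only [ite_add_ite, add_zero, zero_add, ite_self] at hsplit
  rw [cumulativeSum_idealCount_div, hsplit]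
  ring

end DegreeOnePrimes

section Splitting

open NumberField Ideal

variable {K : Type*} [Field K] [NumberField K] {θ : 𝓞 K} {f : ℤ[X]} {p : ℕ}

lemma absNorm_ker_ringHom_zmod [Fact p.Prime] (φ : 𝓞 K →+* ZMod p) :
    absNorm (RingHom.ker φ) = p := by
  rw [absNorm_apply, Submodule.cardQuot_apply]
  exact (Nat.card_congr (RingHom.quotientKerEquivOfSurjective
    (ZMod.ringHom_surjective φ)).toEquiv).trans (Nat.card_zmod p)

lemma exists_ringHom_zmod_ker_eq [hp : Fact p.Prime] {I : Ideal (𝓞 K)} (hI : absNorm I = p) :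
    ∃ φ : 𝓞 K →+* ZMod p, RingHom.ker φ = I := by
  have hcard : Nat.card (𝓞 K ⧸ I) = p := hI
  have : Finite (𝓞 K ⧸ I) := Nat.finite_of_card_ne_zero (hcard ▸ hp.out.ne_zero)
  have := Fintype.ofFinite (𝓞 K ⧸ I)
  rw [Nat.card_eq_fintype_card] at hcard
  let e := (ZMod.ringEquivOfPrime (𝓞 K ⧸ I) hp.out hcard).symm
  refine ⟨(e : 𝓞 K ⧸ I →+* ZMod p).comp (Ideal.Quotient.mk I), ?_⟩
  ext x
  simp [RingHom.mem_ker, Ideal.Quotient.eq_zero_iff_mem]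

variable (K) in
lemma idealCount_eq_card_ringHom (p : ℕ) [Fact p.Prime] :
    idealCount K p = Nat.card (𝓞 K →+* ZMod p) := by
  refine (Nat.card_congr (Equiv.ofBijective
    (fun φ => ⟨RingHom.ker φ, absNorm_ker_ringHom_zmod φ⟩) ⟨fun φ ψ h => ?_, fun I => ?_⟩)).symm
  · exact ZMod.ringHom_eq_of_ker_eq φ ψ (congrArg Subtype.val h)
  · obtain ⟨φ, hφ⟩ := exists_ringHom_zmod_ker_eq I.2
    exact ⟨φ, Subtype.ext hφ⟩

lemma ringHom_zmod_ext_of_apply_eq [Fact p.Prime] (hp : ¬ p ∣ RingOfIntegers.exponent θ)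
    {φ ψ : 𝓞 K →+* ZMod p} (h : φ θ = ψ θ) : φ = ψ := by
  ext x
  obtain ⟨y, hy⟩ :=
    (RingOfIntegers.ZModXQuotSpanEquivQuotSpan hp).surjective (Ideal.Quotient.mk _ x)
  obtain ⟨R, rfl⟩ := Ideal.Quotient.mk_surjective y
  obtain ⟨Q, rfl⟩ := map_surjective (Int.castRingHom (ZMod p)) (ZMod.ringHom_surjective _) R
  rw [RingOfIntegers.ZModXQuotSpanEquivQuotSpan_mk_apply, Ideal.Quotient.eq,
    mem_span_singleton] at hy
  obtain ⟨z, hz⟩ := hy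
  have hval (χ : 𝓞 K →+* ZMod p) : aeval (χ θ) Q = χ x := by
    have hχ := congrArg χ hz
    rw [map_sub, map_mul, map_natCast, CharP.cast_eq_zero, zero_mul, sub_eq_zero] at hχ
    exact (aeval_algHom_apply χ.toIntAlgHom θ Q).trans hχ
  rw [← hval, ← hval, h]

lemma exists_ringHom_zmod_apply_eq [Fact p.Prime] (hp : ¬ p ∣ RingOfIntegers.exponent θ)
    {r : ZMod p} (hr : aeval r (minpoly ℤ θ) = 0) : ∃ φ : 𝓞 K →+* ZMod p, φ θ = r := by
  let evalAt : (ZMod p)[X] ⧸ span {map (Int.castRingHom (ZMod p)) (minpoly ℤ θ)} →+* ZMod p :=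
    Ideal.Quotient.lift _ (evalRingHom r) fun a ha => by
      obtain ⟨b, rfl⟩ := mem_span_singleton.1 ha
      rw [map_mul, coe_evalRingHom, eval_map, ← algebraMap_int_eq, ← aeval_def, hr, zero_mul]
  let e := RingOfIntegers.ZModXQuotSpanEquivQuotSpan hp
  have hθ : e.symm (Ideal.Quotient.mk _ θ) = Ideal.Quotient.mk _ X := by
    rw [RingEquiv.symm_apply_eq]
    simpa using (RingOfIntegers.ZModXQuotSpanEquivQuotSpan_mk_apply hp X).symm
  refine ⟨(evalAt.comp e.symm.toRingHom).comp (Ideal.Quotient.mk _), ?_⟩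
  change evalAt (e.symm (Ideal.Quotient.mk _ θ)) = r
  simp [hθ, evalAt]

lemma card_ringHom_zmod_eq_card_roots [Fact p.Prime] (hp : ¬ p ∣ RingOfIntegers.exponent θ) :
    Nat.card (𝓞 K →+* ZMod p) = Nat.card {r : ZMod p // aeval r (minpoly ℤ θ) = 0} := by
  have hroot (φ : 𝓞 K →+* ZMod p) : aeval (φ θ) (minpoly ℤ θ) = 0 :=
    (aeval_algHom_apply φ.toIntAlgHom θ _).trans (by rw [minpoly.aeval, map_zero])
  refine Nat.card_congr (Equiv.ofBijective (fun φ => ⟨φ θ, hroot φ⟩)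
    ⟨fun φ ψ h => ringHom_zmod_ext_of_apply_eq hp (congrArg Subtype.val h), fun r => ?_⟩)
  obtain ⟨φ, hφ⟩ := exists_ringHom_zmod_apply_eq hp r.2
  exact ⟨φ, Subtype.ext hφ⟩

lemma exponent_ne_zero_of_adjoin_eq_top (h : Algebra.adjoin ℚ {(θ : K)} = ⊤) :
    RingOfIntegers.exponent θ ≠ 0 := by
  have hsep : aeval (θ : K) (derivative (minpoly ℚ (θ : K))) ≠ 0 :=
    (Algebra.IsSeparable.isSeparable ℚ (θ : K)).aeval_derivative_ne_zero (minpoly.aeval ℚ _)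
  rw [minpoly.isIntegrallyClosed_eq_field_fractions ℚ K (RingOfIntegers.isIntegral θ),
    derivative_map, aeval_map_algebraMap, aeval_algebraMap_apply] at hsep
  have hconductor : conductor ℤ θ ≠ ⊥ := by
    intro hbot
    have hmul := conductor_mul_differentIdeal ℤ ℚ K θ h
    rw [hbot, Ideal.bot_mul, eq_comm, span_singleton_eq_bot] at hmul
    exact hsep (by rw [hmul, map_zero])
  rw [RingOfIntegers.exponent, Ne, absNorm_eq_zero_iff]
  exact mt eq_bot_of_comap_eq_bot hconductor

lemma natDegree_minpoly_eq_finrank (h : Algebra.adjoin ℚ {(θ : K)} = ⊤) :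
    (minpoly ℤ θ).natDegree = Module.finrank ℚ K := by
  have hint := RingOfIntegers.isIntegral θ
  have hprimitive : IntermediateField.adjoin ℚ {(θ : K)} = ⊤ := by
    rw [← IntermediateField.toSubalgebra_inj, IntermediateField.top_toSubalgebra, ← h]
    exact IntermediateField.adjoin_simple_toSubalgebra_of_isAlgebraic
      (Algebra.IsAlgebraic.isAlgebraic _)
  rw [← (Field.primitive_element_iff_minpoly_natDegree_eq ℚ (θ : K)).1 hprimitive,
    minpoly.isIntegrallyClosed_eq_field_fractions ℚ K hint, (minpoly.monic hint).natDegree_map]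

lemma adjoin_singleton_smul {F A : Type*} [Field F] [Semiring A] [Algebra F A] {c : F}
    (hc : c ≠ 0) (x : A) : Algebra.adjoin F {c • x} = Algebra.adjoin F {x} := by
  refine le_antisymm (Algebra.adjoin_singleton_le ?_) (Algebra.adjoin_singleton_le ?_)
  · exact Subalgebra.smul_mem _ (Algebra.self_mem_adjoin_singleton F x) c
  · have hmem := Subalgebra.smul_mem _ (Algebra.self_mem_adjoin_singleton F (c • x)) c⁻¹
    rwa [inv_smul_smul₀ hc] at hmem

lemma exists_ringOfIntegers_minpoly_eq (hdeg : 1 ≤ f.natDegree) {x : K} (hx : aeval x f = 0)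
    (htop : Algebra.adjoin ℚ {x} = ⊤) (hrank : Module.finrank ℚ K = f.natDegree) :
    ∃ θ : 𝓞 K, Algebra.adjoin ℚ {(θ : K)} = ⊤ ∧ minpoly ℤ θ = f.integralNormalization := by
  have hf : f ≠ 0 := ne_zero_of_natDegree_gt hdeg
  have hmonic := monic_integralNormalization hf
  have hroot : aeval (algebraMap ℤ K f.leadingCoeff * x) f.integralNormalization = 0 := by
    rw [aeval_def, integralNormalization_eval₂_leadingCoeff_mul hdeg, ← aeval_def, hx, mul_zero]
  let θ : 𝓞 K := ⟨algebraMap ℤ K f.leadingCoeff * x, f.integralNormalization, hmonic, hroot⟩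
  have hθ : (θ : K) = (f.leadingCoeff : ℚ) • x := by
    rw [Algebra.smul_def, map_intCast, ← eq_intCast (algebraMap ℤ K)]
    rfl
  have hθtop : Algebra.adjoin ℚ {(θ : K)} = ⊤ := by
    rw [hθ, adjoin_singleton_smul (Int.cast_ne_zero.2 (leadingCoeff_ne_zero.2 hf)), htop]
  refine ⟨θ, hθtop, ?_⟩
  have hint := RingOfIntegers.isIntegral θ
  refine (eq_of_monic_of_dvd_of_natDegree_le (minpoly.monic hint) hmonic
    (minpoly.isIntegrallyClosed_dvd hint ?_) ?_).symm
  · apply RingOfIntegers.coe_injective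
    rw [map_zero, ← aeval_algebraMap_apply]
    exact hroot
  · rw [natDegree_integralNormalization, natDegree_minpoly_eq_finrank hθtop, hrank]

lemma exists_numberField_root (hirr : Irreducible f) (hdeg : 1 ≤ f.natDegree) :
    ∃ (K : Type) (_ : Field K) (_ : NumberField K) (x : K), aeval x f = 0 ∧
      Algebra.adjoin ℚ {x} = ⊤ ∧ Module.finrank ℚ K = f.natDegree := by
  let g : ℚ[X] := f.map (algebraMap ℤ ℚ)
  have hg : Irreducible g :=
    (hirr.isPrimitive (by lia)).irreducible_iff_irreducible_map_fraction_map.1 hirr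
  have : Fact (Irreducible g) := ⟨hg⟩
  let pb := AdjoinRoot.powerBasis hg.ne_zero
  have : FiniteDimensional ℚ (AdjoinRoot g) := pb.finite
  have : CharZero (AdjoinRoot g) :=
    charZero_of_injective_algebraMap (algebraMap ℚ (AdjoinRoot g)).injective
  refine ⟨AdjoinRoot g, inferInstance, ⟨⟩, AdjoinRoot.root g, ?_,
    AdjoinRoot.adjoinRoot_eq_top, ?_⟩
  · have hroot := AdjoinRoot.eval₂_root g
    rw [eval₂_map] at hroot
    exact (eval₂_congr (RingHom.ext_int _ _) rfl rfl).trans hroot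
  · rw [pb.finrank, AdjoinRoot.powerBasis_dim,
      natDegree_map_eq_of_injective (algebraMap ℤ ℚ).injective_int]

lemma card_roots_integralNormalization (hdeg : 1 ≤ f.natDegree) [Fact p.Prime]
    (hp : ¬ (p : ℤ) ∣ f.leadingCoeff) :
    Nat.card {r : ZMod p // aeval r f.integralNormalization = 0} =
      Nat.card {r : ZMod p // aeval r f = 0} := by
  have hunit : algebraMap ℤ (ZMod p) f.leadingCoeff ≠ 0 := by
    rwa [algebraMap_int_eq, eq_intCast, Ne, ZMod.intCast_zmod_eq_zero_iff_dvd]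
  refine (Nat.card_congr ((Equiv.mulLeft₀ _ hunit).subtypeEquiv fun r => ?_)).symm
  rw [Equiv.mulLeft₀_apply, aeval_def, aeval_def,
    integralNormalization_eval₂_leadingCoeff_mul hdeg, mul_eq_zero,
    or_iff_right (pow_ne_zero _ hunit)]

lemma dvd_eval_iff_aeval_eq_zero {a : ℕ} : (p : ℤ) ∣ f.eval (a : ℤ) ↔ aeval (a : ZMod p) f = 0 := by
  rw [← ZMod.intCast_zmod_eq_zero_iff_dvd, ← eq_intCast (algebraMap ℤ (ZMod p)),
    ← aeval_algebraMap_apply_eq_algebraMap_eval, map_natCast]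

lemma coprime_of_dvd_eval (hp : p.Prime) (h0 : ¬ (p : ℤ) ∣ f.coeff 0) {a : ℕ}
    (ha : (p : ℤ) ∣ f.eval (a : ℤ)) : a.Coprime p := by
  refine ((hp.coprime_iff_not_dvd).2 fun hpa => h0 ?_).symm
  have hsub : (a : ℤ) ∣ f.eval (a : ℤ) - f.eval 0 := by
    simpa only [sub_zero] using sub_dvd_eval_sub (a : ℤ) 0 f
  rw [coeff_zero_eq_eval_zero]
  exact (dvd_sub_right ha).1 ((Int.natCast_dvd_natCast.2 hpa).trans hsub)

lemma card_roots_eq_nu1 [hp : Fact p.Prime] (h0 : ¬ (p : ℤ) ∣ f.coeff 0) :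
    Nat.card {r : ZMod p // aeval r f = 0} = nu1 f p := by
  classical
  rw [Nat.card_eq_fintype_card, Fintype.card_subtype, nu1]
  refine Finset.card_nbij' ZMod.val (fun a => (a : ZMod p)) (fun r hr => ?_) (fun a ha => ?_)
    (fun r _ => ZMod.natCast_zmod_val r) (fun a ha => ?_)
  · have hdvd : (p : ℤ) ∣ f.eval (r.val : ℤ) := by
      rw [dvd_eval_iff_aeval_eq_zero, ZMod.natCast_zmod_val]
      exact (Finset.mem_filter.1 hr).2
    exact Finset.mem_filter.2
      ⟨Finset.mem_range.2 (ZMod.val_lt r), coprime_of_dvd_eval hp.out h0 hdvd, hdvd⟩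
  · exact Finset.mem_filter.2
      ⟨Finset.mem_univ _, dvd_eval_iff_aeval_eq_zero.1 (Finset.mem_filter.1 ha).2.2⟩
  · exact ZMod.val_cast_of_lt (Finset.mem_range.1 (Finset.mem_filter.1 ha).1)

lemma eventually_not_dvd {a : ℤ} (ha : a ≠ 0) :
    ∀ᶠ p : Nat.Primes in cofinite, ¬ ((p : ℕ) : ℤ) ∣ a := by
  have hfin : {n : ℕ | n ∣ a.natAbs}.Finite :=
    a.natAbs.divisors.finite_toSet.subset fun n hn =>
      Nat.mem_divisors.2 ⟨hn, Int.natAbs_ne_zero.2 ha⟩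
  filter_upwards [(hfin.preimage Subtype.val_injective.injOn).compl_mem_cofinite] with p hp
  rwa [Int.natCast_dvd]

lemma eventually_idealCount_prime_eq_nu1 (hdeg : 1 ≤ f.natDegree) (hconst : f.coeff 0 ≠ 0)
    (htop : Algebra.adjoin ℚ {(θ : K)} = ⊤) (hθ : minpoly ℤ θ = f.integralNormalization) :
    ∀ᶠ p : Nat.Primes in cofinite, idealCount K p = nu1 f p := by
  have hlead : f.leadingCoeff ≠ 0 := leadingCoeff_ne_zero.2 (ne_zero_of_natDegree_gt hdeg)
  have hexponent : (RingOfIntegers.exponent θ : ℤ) ≠ 0 :=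
    Int.natCast_ne_zero.2 (exponent_ne_zero_of_adjoin_eq_top htop)
  filter_upwards [eventually_not_dvd hexponent, eventually_not_dvd hlead,
    eventually_not_dvd hconst] with p hpθ hplead hpconst
  have : Fact (p : ℕ).Prime := ⟨p.2⟩
  rw [idealCount_eq_card_ringHom,
    card_ringHom_zmod_eq_card_roots (mt Int.natCast_dvd_natCast.2 hpθ), hθ,
    card_roots_integralNormalization hdeg hplead, card_roots_eq_nu1 hpconst]

end Splitting

section LocalFactors

lemma nu2_prime_eq_nu1_add_one (f : ℤ[X]) {p : ℕ} (hp : p.Prime) : nu2 f p = nu1 f p + 1 := by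
  have hzero : 0 ∉ (Finset.range p).filter
      (fun a : ℕ => Nat.gcd a p = 1 ∧ (p : ℤ) ∣ f.eval (a : ℤ)) := by
    simp [hp.ne_one]
  rw [nu1, nu2, ← Finset.card_insert_of_notMem hzero]
  congr 1
  ext a
  simp only [Finset.mem_insert, Finset.mem_filter, Finset.mem_range]
  rcases Nat.eq_zero_or_pos a with rfl | ha
  · simp [hp.pos]
  · refine ⟨fun ⟨hap, hdvd⟩ => Or.inr ⟨hap, ?_⟩, fun h => ?_⟩
    · have hndvd : ¬ p ∣ a := Nat.not_dvd_of_pos_of_lt ha hap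
      exact ⟨(hp.coprime_iff_not_dvd.2 hndvd).symm,
        ((Nat.prime_iff_prime_int.1 hp).dvd_or_dvd hdvd).resolve_left
          (mt Int.natCast_dvd_natCast.1 hndvd)⟩
    · obtain ⟨hap, -, hdvd⟩ := h.resolve_left ha.ne'
      exact ⟨hap, hdvd.mul_left _⟩

lemma one_sub_nu2_div_eq (f : ℤ[X]) {p : ℕ} (hp : p.Prime) :
    1 - (nu2 f p : ℝ) / p = (1 - (p : ℝ)⁻¹) * (1 - (nu1 f p : ℝ) / ((p : ℝ) - 1)) := by
  have hp0 : (p : ℝ) ≠ 0 := Nat.cast_ne_zero.2 hp.ne_zero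
  have hp1 : (p : ℝ) - 1 ≠ 0 := sub_ne_zero.2 (Nat.cast_ne_one.2 hp.ne_one)
  rw [nu2_prime_eq_nu1_add_one f hp, Nat.cast_add, Nat.cast_one]
  field_simp
  ring

lemma one_sub_nu1_div_pos {f : ℤ[X]} {p : ℕ} (hp : p.Prime) (h : nu1 f p < p - 1) :
    0 < 1 - (nu1 f p : ℝ) / ((p : ℝ) - 1) := by
  have hp1 : (0 : ℝ) < (p : ℝ) - 1 := sub_pos.2 (Nat.one_lt_cast.2 hp.one_lt)
  rw [sub_pos, div_lt_one hp1, ← Nat.cast_one, ← Nat.cast_sub hp.one_le]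
  exact Nat.cast_lt.2 h

open NumberField in
lemma summable_log_one_sub_nu1_div_add {K : Type*} [Field K] [NumberField K] {f : ℤ[X]}
    (h : ∀ᶠ p : Nat.Primes in cofinite, idealCount K p = nu1 f p) :
    Summable fun p : Nat.Primes =>
      Real.log (1 - (nu1 f p : ℝ) / ((p : ℝ) - 1)) + (idealCount K p : ℝ) / p := by
  refine (summable_log_one_sub_div_sub_one_add (fun p : Nat.Primes => Nat.cast_nonneg _)
    fun p => Nat.cast_le.2 (idealCount_prime_le_finrank K p)).congr_cofinite ?_
  filter_upwards [h] with p hp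
  rw [hp]

end LocalFactors

theorem nu1_nu2_product_asymptotics (f : Polynomial ℤ) (hirr : Irreducible f)
    (hdeg : 1 ≤ f.natDegree) (hconst : f.coeff 0 ≠ 0)
    (hloc : ∀ p : ℕ, p.Prime → nu1 f p < p - 1) :
    ∃ L₁ L₂ : ℝ, 0 < L₁ ∧ 0 < L₂ ∧
      Tendsto (fun x : ℝ => Real.log x *
          ∏ p ∈ (Finset.range (⌊x⌋₊ + 1)).filter Nat.Prime,
            (1 - (nu1 f p : ℝ) / ((p : ℝ) - 1)))
        atTop (nhds L₁) ∧
      Tendsto (fun x : ℝ => (Real.log x) ^ 2 *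
          ∏ p ∈ (Finset.range (⌊x⌋₊ + 1)).filter Nat.Prime,
            (1 - (nu2 f p : ℝ) / (p : ℝ)))
        atTop (nhds L₂) ∧
      L₂ = Real.exp (-Real.eulerMascheroniConstant) * L₁ := by
  obtain ⟨K, _, _, x, hx, htop, hrank⟩ := exists_numberField_root hirr hdeg
  obtain ⟨θ, hθtop, hθ⟩ := exists_ringOfIntegers_minpoly_eq hdeg hx htop hrank
  obtain ⟨M, hM⟩ := exists_tendsto_cumulativeSum_idealCount_div K
  have hsum := summable_log_one_sub_nu1_div_add
    (eventually_idealCount_prime_eq_nu1 hdeg hconst hθtop hθ)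
  have hL₁ := tendsto_log_mul_prod_primes (g := fun p => (idealCount K p : ℝ) / p)
    (fun p hp => one_sub_nu1_div_pos hp (hloc p hp)) hM hsum.hasSum
  refine ⟨_, _, Real.exp_pos _, mul_pos (Real.exp_pos _) (Real.exp_pos _), hL₁,
    (tendsto_log_mul_prod_one_sub_inv.mul hL₁).congr fun y => ?_, rfl⟩
  rw [Finset.prod_congr rfl fun p hp => one_sub_nu2_div_eq f (Finset.mem_filter.1 hp).2,
    Finset.prod_mul_distrib]
  ring
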